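/- arXiv:1211.1450 — 2 statements merged into one kernel-verified Lean document; each statement's English description precedes it below -/
import Mathlib

section
/- Let n ∈ ℕ and let α ∈ ℝ with 0 < α < 1. The function g : ℂ → ℝ given by g(z) = |z|^{n+α} is n times continuously differentiable in the real sense (ContDiff ℝ n), and for every compact set K ⊆ ℂ there is a constant C ≥ 0 such that the n-th iterated derivative of g is α-Hölder continuous on K with constant C. In other words, |z|^{n+α} ∈ C^{n,α}_loc(ℂ). -/
/-!
The function `‖x‖ ^ s` is positively homogeneous of degree `s` and smooth away from `0`, so its
`k`-th derivative is positively homogeneous of degree `s - k` and, its norm being invariant under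
rotations, is bounded by `C ‖x‖ ^ (s - k)`. For `k < s` this forces it to extend continuously by
`0` at the origin, and for `k + 1 < s` even differentiably, with derivative `0`. When `s = n + α`,
the `n`-th derivative `F` satisfies `‖F x‖ ≤ A ‖x‖ ^ α` and `‖DF x‖ ≤ B ‖x‖ ^ (α - 1)`. If
`‖p - q‖` is comparable with `‖p‖`, the first bound gives the Hölder estimate; otherwise `0` is far
from both `p` and `q`, and the second bound gives it through the mean value inequality.
-/

open Filter Topology

section PowerBounds

variable {E F : Type*} [NormedAddCommGroup E] [NormedAddCommGroup F] {f : E → F} {A B C r α : ℝ}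

lemma eq_zero_of_norm_le_mul_rpow_norm (hr : r ≠ 0) (h : ∀ x, ‖f x‖ ≤ C * ‖x‖ ^ r) : f 0 = 0 := by
  simpa [Real.zero_rpow hr] using h 0

lemma tendsto_mul_rpow_norm_zero (hr : 0 < r) :
    Tendsto (fun x : E => C * ‖x‖ ^ r) (𝓝 0) (𝓝 0) := by
  have hcont : Continuous fun x : E => C * ‖x‖ ^ r :=
    continuous_const.mul (continuous_norm.rpow_const fun _ => Or.inr hr.le)
  simpa [Real.zero_rpow hr.ne'] using hcont.tendsto 0

lemma continuousAt_zero_of_norm_le_mul_rpow_norm (hr : 0 < r)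
    (h : ∀ x, ‖f x‖ ≤ C * ‖x‖ ^ r) : ContinuousAt f 0 := by
  rw [ContinuousAt, eq_zero_of_norm_le_mul_rpow_norm hr.ne' h]
  exact squeeze_zero_norm h (tendsto_mul_rpow_norm_zero hr)

lemma norm_sub_le_mul_rpow_of_norm_le_two_mul (hα : 0 ≤ α) (hA : 0 ≤ A)
    (h : ∀ x, ‖f x‖ ≤ A * ‖x‖ ^ α) {p q : E} (hpq : ‖p‖ ≤ 2 * ‖p - q‖) :
    ‖f p - f q‖ ≤ 2 * A * 3 ^ α * ‖p - q‖ ^ α := by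
  have bound {x : E} (hx : ‖x‖ ≤ 3 * ‖p - q‖) : ‖f x‖ ≤ A * (3 ^ α * ‖p - q‖ ^ α) := by
    rw [← Real.mul_rpow (by norm_num) (norm_nonneg _)]
    exact (h x).trans (by gcongr)
  have hp : ‖p‖ ≤ 3 * ‖p - q‖ := by linarith [norm_nonneg (p - q)]
  have hq : ‖q‖ ≤ 3 * ‖p - q‖ := by linarith [norm_le_norm_add_norm_sub p q]
  calc ‖f p - f q‖ ≤ ‖f p‖ + ‖f q‖ := norm_sub_le _ _
    _ ≤ A * (3 ^ α * ‖p - q‖ ^ α) + A * (3 ^ α * ‖p - q‖ ^ α) := add_le_add (bound hp) (bound hq)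
    _ = 2 * A * 3 ^ α * ‖p - q‖ ^ α := by ring

variable [NormedSpace ℝ E] [NormedSpace ℝ F]

lemma hasFDerivAt_zero_of_norm_le_mul_rpow_norm (hr : 1 < r)
    (h : ∀ x, ‖f x‖ ≤ C * ‖x‖ ^ r) : HasFDerivAt f (0 : E →L[ℝ] F) 0 := by
  have hf0 : f 0 = 0 := eq_zero_of_norm_le_mul_rpow_norm (by linarith) h
  rw [hasFDerivAt_iff_tendsto]
  refine squeeze_zero (fun x => by positivity) (fun x => ?_)
    (tendsto_mul_rpow_norm_zero (C := C) (sub_pos.2 hr))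
  simp only [sub_zero, hf0, zero_apply]
  rcases eq_or_ne x 0 with rfl | hx
  · simp [Real.zero_rpow (sub_pos.2 hr).ne']
  · calc ‖x‖⁻¹ * ‖f x‖ ≤ ‖x‖⁻¹ * (C * ‖x‖ ^ r) := by gcongr; exact h x
      _ = C * ‖x‖ ^ (r - 1) := by rw [Real.rpow_sub_one (norm_ne_zero_iff.2 hx)]; ring

lemma norm_sub_le_mul_rpow_of_two_mul_lt_norm (hα : α ≤ 1) (hB : 0 ≤ B)
    (hf : ∀ x, x ≠ 0 → DifferentiableAt ℝ f x)
    (hf' : ∀ x, x ≠ 0 → ‖fderiv ℝ f x‖ ≤ B * ‖x‖ ^ (α - 1)) {p q : E}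
    (hpq : 2 * ‖p - q‖ < ‖p‖) : ‖f p - f q‖ ≤ B * ‖p - q‖ ^ α := by
  rcases eq_or_ne p q with rfl | hne
  · rw [sub_self, norm_zero]; positivity
  have hd : 0 < ‖p - q‖ := norm_sub_pos_iff.2 hne
  have norm_le_of_mem {x : E} (hx : x ∈ Metric.closedBall p ‖p - q‖) : ‖p - q‖ ≤ ‖x‖ := by
    rw [mem_closedBall_iff_norm'] at hx
    linarith [norm_sub_norm_le p x]
  have ne_zero_of_mem {x : E} (hx : x ∈ Metric.closedBall p ‖p - q‖) : x ≠ 0 :=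
    norm_pos_iff.1 (hd.trans_le (norm_le_of_mem hx))
  have fderiv_le {x : E} (hx : x ∈ Metric.closedBall p ‖p - q‖) :
      ‖fderiv ℝ f x‖ ≤ B * ‖p - q‖ ^ (α - 1) :=
    (hf' x (ne_zero_of_mem hx)).trans <| mul_le_mul_of_nonneg_left
      (Real.rpow_le_rpow_of_nonpos hd (norm_le_of_mem hx) (by linarith)) hB
  calc ‖f p - f q‖ ≤ B * ‖p - q‖ ^ (α - 1) * ‖p - q‖ :=
        (convex_closedBall p ‖p - q‖).norm_image_sub_le_of_norm_fderiv_le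
          (fun x hx => hf x (ne_zero_of_mem hx)) (fun x hx => fderiv_le hx)
          (mem_closedBall_iff_norm'.2 le_rfl) (Metric.mem_closedBall_self hd.le)
    _ = B * ‖p - q‖ ^ α := by rw [Real.rpow_sub_one hd.ne', mul_assoc, div_mul_cancel₀ _ hd.ne']

lemma norm_sub_le_mul_rpow_of_norm_fderiv_le (hα0 : 0 ≤ α) (hα1 : α ≤ 1) (hA : 0 ≤ A) (hB : 0 ≤ B)
    (h : ∀ x, ‖f x‖ ≤ A * ‖x‖ ^ α) (hf : ∀ x, x ≠ 0 → DifferentiableAt ℝ f x)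
    (hf' : ∀ x, x ≠ 0 → ‖fderiv ℝ f x‖ ≤ B * ‖x‖ ^ (α - 1)) (p q : E) :
    ‖f p - f q‖ ≤ (2 * A * 3 ^ α + B) * ‖p - q‖ ^ α := by
  rw [add_mul]
  rcases le_or_gt ‖p‖ (2 * ‖p - q‖) with hpq | hpq
  · exact (norm_sub_le_mul_rpow_of_norm_le_two_mul hα0 hA h hpq).trans
      (le_add_of_nonneg_right (by positivity))
  · exact (norm_sub_le_mul_rpow_of_two_mul_lt_norm hα1 hB hf hf' hpq).trans
      (le_add_of_nonneg_left (by positivity))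

end PowerBounds

section Homogeneous

variable {E F : Type*} [NormedAddCommGroup E] [NormedSpace ℝ E] [NormedAddCommGroup F]
  [NormedSpace ℝ F]

/-- Positive homogeneity of real degree `s`. Only scalars `t > 0` are allowed: at `t = 0` the
convention `0 ^ 0 = 1` would force functions of degree `0` to be constant. -/
def IsPosHomogeneous (s : ℝ) (f : E → F) : Prop :=
  ∀ ⦃t : ℝ⦄, 0 < t → ∀ x, f (t • x) = t ^ s • f x

/-- Boundedness on the unit sphere, which together with homogeneity controls a function on the
whole punctured space. -/
def IsBoundedOnUnitSphere (f : E → F) : Prop :=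
  ∃ C : ℝ, 0 ≤ C ∧ ∀ x, ‖x‖ = 1 → ‖f x‖ ≤ C

variable {f : E → F} {s α : ℝ} {n : ℕ}

namespace IsPosHomogeneous

protected lemma map_zero (hf : IsPosHomogeneous s f) (hs : s ≠ 0) : f 0 = 0 := by
  have h2 : (2 : ℝ) ^ s ≠ 1 := by
    rwa [Ne, ← Real.rpow_zero 2, Real.rpow_right_inj two_pos (by norm_num)]
  have hfix : (1 : ℝ) • f 0 = (2 : ℝ) ^ s • f 0 := by
    simpa only [smul_zero, one_smul] using hf two_pos 0
  by_contra hf0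
  exact h2 (smul_left_injective ℝ hf0 hfix).symm

protected lemma fderiv (hf : IsPosHomogeneous s f) : IsPosHomogeneous (s - 1) (fderiv ℝ f) := by
  intro t ht x
  have hfun : (fun y => f (t • y)) = t ^ s • f := funext (hf ht)
  have hderiv : t • fderiv ℝ f (t • x) = t ^ s • fderiv ℝ f x := by
    rw [← fderiv_comp_smul, hfun, fderiv_const_smul_field, Pi.smul_apply]
  rw [Real.rpow_sub_one ht.ne', div_eq_inv_mul, mul_smul, ← hderiv, inv_smul_smul₀ ht.ne']

protected lemma iteratedFDeriv (hf : IsPosHomogeneous s f) (k : ℕ) :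
    IsPosHomogeneous (s - k) (iteratedFDeriv ℝ k f) := by
  induction k with
  | zero =>
    intro t ht x
    simp only [iteratedFDeriv_zero_eq_comp, Function.comp_apply, hf ht, map_smul, Nat.cast_zero,
      sub_zero]
  | succ k ih =>
    intro t ht x
    simp only [iteratedFDeriv_succ_eq_comp_left, Function.comp_apply, ih.fderiv ht, map_smul,
      Nat.cast_succ, sub_sub]

lemma exists_norm_le (hf : IsPosHomogeneous s f) (hb : IsBoundedOnUnitSphere f) :
    ∃ C : ℝ, 0 ≤ C ∧ ∀ x, x ≠ 0 → ‖f x‖ ≤ C * ‖x‖ ^ s := by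
  obtain ⟨C, hC0, hC⟩ := hb
  refine ⟨C, hC0, fun x hx => ?_⟩
  have hx' : 0 < ‖x‖ := norm_pos_iff.2 hx
  calc ‖f x‖ = ‖f (‖x‖ • ‖x‖⁻¹ • x)‖ := by rw [smul_inv_smul₀ hx'.ne']
    _ = ‖x‖ ^ s * ‖f (‖x‖⁻¹ • x)‖ := by
        rw [hf hx', norm_smul, Real.norm_of_nonneg (by positivity)]
    _ ≤ ‖x‖ ^ s * C := by gcongr; exact hC _ (norm_smul_inv_norm hx)
    _ = C * ‖x‖ ^ s := mul_comm _ _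

lemma exists_forall_norm_le (hf : IsPosHomogeneous s f) (hs : s ≠ 0)
    (hb : IsBoundedOnUnitSphere f) : ∃ C : ℝ, 0 ≤ C ∧ ∀ x, ‖f x‖ ≤ C * ‖x‖ ^ s := by
  obtain ⟨C, hC0, hC⟩ := hf.exists_norm_le hb
  refine ⟨C, hC0, fun x => ?_⟩
  rcases eq_or_ne x 0 with rfl | hx
  · simp [hf.map_zero hs, Real.zero_rpow hs]
  · exact hC x hx

protected theorem contDiff (hf : IsPosHomogeneous s f) (hs : n < s)
    (hsmooth : ∀ x, x ≠ 0 → ContDiffAt ℝ n f x)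
    (hb : ∀ k ≤ n, IsBoundedOnUnitSphere (iteratedFDeriv ℝ k f)) : ContDiff ℝ n f := by
  refine contDiff_nat_iff_continuous_differentiable.2 ⟨fun k hk => ?_, fun k hk x => ?_⟩
  · have hks : 0 < s - k := sub_pos.2 ((Nat.cast_le.2 hk).trans_lt hs)
    obtain ⟨C, -, hC⟩ := (hf.iteratedFDeriv k).exists_forall_norm_le hks.ne' (hb k hk)
    refine continuous_iff_continuousAt.2 fun x => ?_
    rcases eq_or_ne x 0 with rfl | hx
    · exact continuousAt_zero_of_norm_le_mul_rpow_norm hks hC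
    · exact (hsmooth x hx).continuousAt_iteratedFDeriv (Nat.cast_le.2 hk)
  · have hks : 1 < s - k := by
      have : (k : ℝ) + 1 ≤ n := mod_cast hk
      linarith
    obtain ⟨C, -, hC⟩ := (hf.iteratedFDeriv k).exists_forall_norm_le (by linarith) (hb k hk.le)
    rcases eq_or_ne x 0 with rfl | hx
    · exact (hasFDerivAt_zero_of_norm_le_mul_rpow_norm hks hC).differentiableAt
    · exact (hsmooth x hx).differentiableAt_iteratedFDeriv (Nat.cast_lt.2 hk)

theorem exists_norm_sub_le (hf : IsPosHomogeneous α f) (hα0 : 0 < α) (hα1 : α ≤ 1)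
    (hdiff : ∀ x, x ≠ 0 → DifferentiableAt ℝ f x) (hb : IsBoundedOnUnitSphere f)
    (hb' : IsBoundedOnUnitSphere (fderiv ℝ f)) :
    ∃ C : ℝ, 0 ≤ C ∧ ∀ p q, ‖f p - f q‖ ≤ C * ‖p - q‖ ^ α := by
  obtain ⟨A, hA0, hA⟩ := hf.exists_forall_norm_le hα0.ne' hb
  obtain ⟨B, hB0, hB⟩ := hf.fderiv.exists_norm_le hb'
  exact ⟨2 * A * 3 ^ α + B, by positivity,
    norm_sub_le_mul_rpow_of_norm_fderiv_le hα0.le hα1 hA0 hB0 hA hdiff hB⟩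

end IsPosHomogeneous

lemma isPosHomogeneous_norm_rpow (s : ℝ) : IsPosHomogeneous s fun x : E => ‖x‖ ^ s := fun t ht x =>
  calc ‖t • x‖ ^ s = (t * ‖x‖) ^ s := by rw [norm_smul, Real.norm_of_nonneg ht.le]
    _ = t ^ s • ‖x‖ ^ s := Real.mul_rpow ht.le (norm_nonneg x)

end Homogeneous

section Radial

variable {E F : Type*} [NormedAddCommGroup E] [InnerProductSpace ℝ E] [NormedAddCommGroup F]
  [NormedSpace ℝ F]

lemma contDiffAt_norm_rpow (s : ℝ) {k : WithTop ℕ∞} {x : E} (hx : x ≠ 0) :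
    ContDiffAt ℝ k (fun x : E => ‖x‖ ^ s) x :=
  (contDiffAt_norm ℝ hx).rpow_const_of_ne (norm_ne_zero_iff.2 hx)

lemma norm_iteratedFDeriv_comp_norm_eq (φ : ℝ → F) (k : ℕ) {x y : E} (h : ‖x‖ = ‖y‖) :
    ‖iteratedFDeriv ℝ k (fun z : E => φ ‖z‖) x‖ = ‖iteratedFDeriv ℝ k (fun z : E => φ ‖z‖) y‖ := by
  let R : E ≃ₗᵢ[ℝ] E := (ℝ ∙ (x - y))ᗮ.reflection
  have hR : (fun z : E => φ ‖z‖) ∘ R = fun z => φ ‖z‖ := by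
    ext z
    rw [Function.comp_apply, R.norm_map]
  rw [← Submodule.reflection_sub h, ← R.norm_iteratedFDeriv_comp_right, hR]

lemma isBoundedOnUnitSphere_iteratedFDeriv_comp_norm (φ : ℝ → F) (k : ℕ) :
    IsBoundedOnUnitSphere (iteratedFDeriv ℝ k fun x : E => φ ‖x‖) := by
  by_cases h : ∃ e : E, ‖e‖ = 1
  · obtain ⟨e, he⟩ := h
    exact ⟨_, norm_nonneg _, fun x hx =>
      (norm_iteratedFDeriv_comp_norm_eq φ k (hx.trans he.symm)).le⟩
  · exact ⟨0, le_rfl, fun x hx => (h ⟨x, hx⟩).elim⟩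

end Radial

theorem absPow_contDiff_and_holder_general {E : Type*} [NormedAddCommGroup E]
    [InnerProductSpace ℝ E] (n : ℕ) (α : ℝ) (hα0 : 0 < α) (hα1 : α ≤ 1) :
    ContDiff ℝ n (fun x : E => ‖x‖ ^ ((n : ℝ) + α)) ∧
    ∃ C : ℝ, 0 ≤ C ∧ ∀ p q : E,
      ‖iteratedFDeriv ℝ n (fun x : E => ‖x‖ ^ ((n : ℝ) + α)) p
        - iteratedFDeriv ℝ n (fun x : E => ‖x‖ ^ ((n : ℝ) + α)) q‖
      ≤ C * ‖p - q‖ ^ α := by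
  have hhom := isPosHomogeneous_norm_rpow (E := E) (n + α)
  have hb := isBoundedOnUnitSphere_iteratedFDeriv_comp_norm (E := E) (· ^ ((n : ℝ) + α))
  refine ⟨hhom.contDiff (by linarith) (fun x => contDiffAt_norm_rpow _) fun k _ => hb k, ?_⟩
  have hhom_n := hhom.iteratedFDeriv n
  rw [add_sub_cancel_left] at hhom_n
  refine hhom_n.exists_norm_sub_le hα0 hα1 (fun x hx => ?_) (hb n) ?_
  · exact (contDiffAt_norm_rpow _ (k := (n + 1 : ℕ)) hx).differentiableAt_iteratedFDeriv
      (Nat.cast_lt.2 n.lt_succ_self)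
  · simpa only [IsBoundedOnUnitSphere, norm_fderiv_iteratedFDeriv] using hb (n + 1)

/-- For every `n ∈ ℕ` and `0 < α < 1`, the function `z ↦ |z|^{n+α}` on `ℂ` is
`C^n` in the real sense and its `n`-th iterated derivative is `α`-Hölder
continuous on every compact set; i.e. `|z|^{n+α} ∈ C^{n,α}_loc(ℂ)`. -/
theorem absPow_contDiff_and_holder (n : ℕ) (α : ℝ) (hα0 : 0 < α) (hα1 : α < 1) :
    ContDiff ℝ n (fun z : ℂ => ‖z‖ ^ ((n : ℝ) + α)) ∧
    ∀ K : Set ℂ, IsCompact K → ∃ C : ℝ, 0 ≤ C ∧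
      ∀ p ∈ K, ∀ q ∈ K,
        ‖iteratedFDeriv ℝ n (fun z : ℂ => ‖z‖ ^ ((n : ℝ) + α)) p
          - iteratedFDeriv ℝ n (fun z : ℂ => ‖z‖ ^ ((n : ℝ) + α)) q‖
        ≤ C * ‖p - q‖ ^ α := by
  obtain ⟨hsmooth, C, hC0, hC⟩ := absPow_contDiff_and_holder_general (E := ℂ) n α hα0 hα1.le
  exact ⟨hsmooth, fun K _ => ⟨C, hC0, fun p _ q _ => hC p q⟩⟩
end

section
/- Let F(x,y) = Σ_{m,n≥0} a_{m,n} x^m y^n be given by a power series converging absolutely on a polydisc {|x| < R₀, |y| < R₀}, and let k, l be positive integers with a_{k,0} ≠ 0, a_{0,l} ≠ 0, and a_{m,n} = 0 whenever l·m + k·n < k·l. Then for every R₁ > 1 and every real c with 0 < c < 1/max(k,l): lim_{s→0, s∈ℂ\{0}} |s|^{2l − 2klc} · ∫_{{z : 1/R₁ < |z| < R₁}} |s^{−kl}·F(s^l·z, s^k·z^{−1})|^{−2c} dλ(z) = 0. -/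
open MeasureTheory Filter
open scoped ENNReal

/-!
Dividing `F (s ^ l * z) (s ^ k * z⁻¹)` by `s ^ (k * l)` leaves a function which extends
continuously to `s = 0`, where it is a nonzero Laurent polynomial in `z` with at most `k + 1`
terms. As in Descartes' rule of signs, this bounds the multiplicities of its zeros in `ℂ \ {0}`
by `k`. Near a zero of multiplicity `n ≤ k`, every holomorphic function uniformly close to the
limit is bounded below by a constant times a monic polynomial of degree `n`. Since `c * n < 1`,
the integral of the `-2c`-th power of such a polynomial over a disc is bounded independently of
its roots. So the integrals over the annulus stay bounded as `s → 0`, while the exponent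
`2 * l - 2 * k * l * c = 2 * l * (1 - k * c)` of the prefactor is positive.
-/

open Metric
open scoped Polynomial Topology

section LaurentSums

variable {𝕜 ι : Type*} [NontriviallyNormedField 𝕜] {z₀ : 𝕜}

lemma analyticOrderAt_le_analyticOrderAt_deriv_add_one [CharZero 𝕜] [CompleteSpace 𝕜] {f : 𝕜 → 𝕜}
    (hf : AnalyticAt 𝕜 f z₀) : analyticOrderAt f z₀ ≤ analyticOrderAt (deriv f) z₀ + 1 := by
  rcases eq_or_ne (f z₀) 0 with h0 | h0
  · simpa only [h0, sub_zero] using hf.analyticOrderAt_deriv_add_one.ge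
  · simp only [analyticOrderAt_eq_zero.2 (.inr h0), zero_le]

lemma analyticOrderAt_zpow_mul (n : ℤ) (hz₀ : z₀ ≠ 0) {f : 𝕜 → 𝕜} (hf : AnalyticAt 𝕜 f z₀) :
    analyticOrderAt (fun z ↦ z ^ n * f z) z₀ = analyticOrderAt f z₀ := by
  have hpow : AnalyticAt 𝕜 (fun z : 𝕜 ↦ z ^ n) z₀ := analyticAt_id.zpow hz₀
  have hunit : analyticOrderAt (fun z : 𝕜 ↦ z ^ n) z₀ = 0 :=
    analyticOrderAt_eq_zero.2 (.inr (zpow_ne_zero _ hz₀))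
  exact (analyticOrderAt_mul hpow hf).trans (by rw [hunit, zero_add])

lemma analyticOrderAt_sum_mul_zpow_lt_card [CharZero 𝕜] [CompleteSpace 𝕜] {S : Finset ι}
    (hS : S.Nonempty) {b : ι → 𝕜} (hb : ∀ i ∈ S, b i ≠ 0) {e : ι → ℤ} (he : Set.InjOn e S)
    (hz₀ : z₀ ≠ 0) : analyticOrderAt (fun z ↦ ∑ i ∈ S, b i * z ^ e i) z₀ < S.card := by
  induction hS using Finset.Nonempty.cons_induction generalizing b e with
  | singleton i =>
    have horder : analyticOrderAt (fun z ↦ b i * z ^ e i) z₀ = 0 :=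
      analyticOrderAt_eq_zero.2 (.inr (mul_ne_zero (hb i (by simp)) (zpow_ne_zero _ hz₀)))
    simp [horder]
  | cons i S hiS _ ih =>
    set g : 𝕜 → 𝕜 := fun z ↦ b i + ∑ j ∈ S, b j * z ^ (e j - e i)
    have hg : AnalyticAt 𝕜 g z₀ :=
      analyticAt_const.add (Finset.analyticAt_fun_sum _ fun j _ ↦
        analyticAt_const.mul (analyticAt_id.zpow hz₀))
    have hfactor :
        (fun z ↦ ∑ j ∈ S.cons i hiS, b j * z ^ e j) =ᶠ[𝓝 z₀] fun z ↦ z ^ e i * g z := by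
      filter_upwards [eventually_ne_nhds hz₀] with z hz
      rw [Finset.sum_cons, mul_add, Finset.mul_sum, mul_comm (b i)]
      congr! 2 with j
      rw [zpow_sub₀ hz]
      field_simp
    have hderiv : deriv g =ᶠ[𝓝 z₀]
        fun z ↦ ∑ j ∈ S, (b j * (e j - e i : ℤ)) * z ^ (e j - e i - 1) := by
      filter_upwards [eventually_ne_nhds hz₀] with z hz
      simp only [mul_assoc]
      exact ((HasDerivAt.fun_sum fun j _ ↦
        (hasDerivAt_zpow (e j - e i) z (.inl hz)).const_mul (b j)).const_add (b i)).deriv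
    have hcoeff : ∀ j ∈ S, b j * ((e j - e i : ℤ) : 𝕜) ≠ 0 := fun j hj ↦
      mul_ne_zero (hb j (by simp [hj])) <| Int.cast_ne_zero.2 <| sub_ne_zero.2 fun h ↦
        hiS (he (by simp [hj]) (by simp) h ▸ hj)
    have hinj : Set.InjOn (fun j ↦ e j - e i - 1) S := fun j hj j' hj' h ↦
      he (by simp_all) (by simp_all) (by simpa using h)
    calc analyticOrderAt (fun z ↦ ∑ j ∈ S.cons i hiS, b j * z ^ e j) z₀
        = analyticOrderAt g z₀ := by
          rw [analyticOrderAt_congr hfactor, analyticOrderAt_zpow_mul _ hz₀ hg]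
      _ ≤ analyticOrderAt (deriv g) z₀ + 1 := analyticOrderAt_le_analyticOrderAt_deriv_add_one hg
      _ < S.card + 1 := by
          rw [analyticOrderAt_congr hderiv]
          exact ENat.add_lt_add_iff_right ENat.one_ne_top |>.2 (ih hcoeff hinj)
      _ = (S.cons i hiS).card := by simp

end LaurentSums

section MonicPolynomials

lemma exists_root_norm_sub_pow_natDegree_le {K : Type*} [NormedField K] {p : K[X]}
    (hp : p.Monic) (hs : p.Splits) (hd : p.natDegree ≠ 0) (z : K) :
    ∃ w ∈ p.roots, ‖z - w‖ ^ p.natDegree ≤ ‖p.eval z‖ := by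
  classical
  have hne : p.roots.toFinset.Nonempty := by
    rw [Multiset.toFinset_nonempty, ← Multiset.card_pos, ← hs.natDegree_eq_card_roots]
    exact Nat.pos_of_ne_zero hd
  obtain ⟨w, hw, hmin⟩ := p.roots.toFinset.exists_min_image (fun w ↦ ‖z - w‖) hne
  refine ⟨w, Multiset.mem_toFinset.1 hw, ?_⟩
  calc ‖z - w‖ ^ p.natDegree = (p.roots.map fun _ ↦ ‖z - w‖).prod := by
        rw [Multiset.map_const', Multiset.prod_replicate, hs.natDegree_eq_card_roots]
    _ ≤ (p.roots.map fun v ↦ ‖z - v‖).prod :=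
        Multiset.prod_map_le_prod_map₀ _ _ (fun _ _ ↦ norm_nonneg _)
          fun v hv ↦ hmin v (Multiset.mem_toFinset.2 hv)
    _ = ‖p.eval z‖ := by
        rw [hs.eval_eq_prod_roots_of_monic hp]
        exact (Multiset.prod_hom' _ (normHom : K →*₀ ℝ) _)

lemma lintegral_ball_norm_rpow_neg_ne_top {t : ℝ} (ht : t < 2) :
    ∫⁻ u in ball (0 : ℂ) 1, ENNReal.ofReal (‖u‖ ^ (-t)) ≠ ⊤ := by
  have h : IntegrableOn (fun u : ℂ ↦ ‖u‖ ^ (-t)) (ball 0 1) :=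
    integrableOn_ball_of_norm_le_rpow (C := 1) (by simp) (by simpa using ht)
      (.of_forall fun u ↦ by rw [one_mul, Real.norm_of_nonneg (by positivity)])
      (by fun_prop : Measurable fun u : ℂ ↦ ‖u‖ ^ (-t)).aestronglyMeasurable
  exact h.lintegral_lt_top.ne

/-- Truncating `‖z - w‖ ^ (-t)` to `ball w 1` makes the bound uniform in the roots `w`. -/
lemma ofReal_norm_eval_rpow_le {c : ℝ} (hc : 0 ≤ c) {p : ℂ[X]} (hp : p.Monic) (z : ℂ) :
    ENNReal.ofReal (‖p.eval z‖ ^ (-(2 * c))) ≤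
      1 + ∑ w ∈ p.roots.toFinset,
        (ball 0 1).indicator
          (fun u ↦ ENNReal.ofReal (‖u‖ ^ (-(2 * (c * p.natDegree))))) (z - w) := by
  by_cases hle : ‖p.eval z‖ ^ (-(2 * c)) ≤ 1
  · exact (ENNReal.ofReal_le_one.2 hle).trans le_self_add
  have hlt : ‖p.eval z‖ < 1 := by
    contrapose! hle
    exact Real.rpow_le_one_of_one_le_of_nonpos hle (by linarith)
  have hpos : 0 < ‖p.eval z‖ := by
    refine (norm_nonneg _).lt_of_ne' fun h ↦ hle ?_
    rw [h]
    exact Real.zero_rpow_le_one _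
  have hd : p.natDegree ≠ 0 := fun h ↦ by
    simp [hp.natDegree_eq_zero.1 h] at hlt
  obtain ⟨w, hw, hwz⟩ := exists_root_norm_sub_pow_natDegree_le hp (IsAlgClosed.splits p) hd z
  have hw_pos : 0 < ‖z - w‖ := by
    refine norm_pos_iff.2 (sub_ne_zero.2 ?_)
    rintro rfl
    simp [(Polynomial.mem_roots'.1 hw).2.eq_zero] at hpos
  have hw_mem : z - w ∈ ball 0 1 :=
    mem_ball_zero_iff.2 ((pow_lt_one_iff_of_nonneg (norm_nonneg _) hd).1 (hwz.trans_lt hlt))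
  have hterm : ‖p.eval z‖ ^ (-(2 * c)) ≤ ‖z - w‖ ^ (-(2 * (c * p.natDegree))) :=
    calc ‖p.eval z‖ ^ (-(2 * c)) ≤ (‖z - w‖ ^ p.natDegree) ^ (-(2 * c)) :=
          Real.rpow_le_rpow_of_nonpos (by positivity) hwz (by linarith)
      _ = ‖z - w‖ ^ (-(2 * (c * p.natDegree))) := by
          rw [← Real.rpow_natCast, ← Real.rpow_mul hw_pos.le]
          congr 1
          ring
  calc ENNReal.ofReal (‖p.eval z‖ ^ (-(2 * c)))
      ≤ (ball 0 1).indicator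
          (fun u ↦ ENNReal.ofReal (‖u‖ ^ (-(2 * (c * p.natDegree))))) (z - w) := by
        rw [Set.indicator_of_mem hw_mem]
        exact ENNReal.ofReal_le_ofReal hterm
    _ ≤ _ := (Finset.single_le_sum (f := fun w ↦ (ball 0 1).indicator
          (fun u ↦ ENNReal.ofReal (‖u‖ ^ (-(2 * (c * p.natDegree))))) (z - w))
          (fun _ _ ↦ zero_le) (Multiset.mem_toFinset.2 hw)).trans le_add_self

lemma exists_lintegral_norm_eval_rpow_le {d : ℕ} {c : ℝ} (hc : 0 ≤ c) (hcd : c * d < 1) {E : Set ℂ}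
    (hE : volume E ≠ ⊤) :
    ∃ C : ℝ≥0∞, C ≠ ⊤ ∧ ∀ p : ℂ[X], p.Monic → p.natDegree = d →
      ∫⁻ z in E, ENNReal.ofReal (‖p.eval z‖ ^ (-(2 * c))) ≤ C := by
  set φ : ℂ → ℝ≥0∞ := (ball 0 1).indicator fun u ↦ ENNReal.ofReal (‖u‖ ^ (-(2 * (c * d)))) with hφ
  have hφ_meas : Measurable φ := Measurable.indicator (by fun_prop) measurableSet_ball
  have hφ_int : ∫⁻ u, φ u ≠ ⊤ := by
    rw [hφ, lintegral_indicator measurableSet_ball]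
    exact lintegral_ball_norm_rpow_neg_ne_top (by linarith)
  refine ⟨volume E + d * ∫⁻ u, φ u,
    ENNReal.add_ne_top.2 ⟨hE, ENNReal.mul_ne_top (ENNReal.natCast_ne_top d) hφ_int⟩, ?_⟩
  rintro p hp rfl
  calc ∫⁻ z in E, ENNReal.ofReal (‖p.eval z‖ ^ (-(2 * c)))
      ≤ ∫⁻ z in E, (1 + ∑ w ∈ p.roots.toFinset, φ (z - w)) :=
        lintegral_mono (ofReal_norm_eval_rpow_le hc hp)
    _ = volume E + ∑ w ∈ p.roots.toFinset, ∫⁻ z in E, φ (z - w) := by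
        rw [lintegral_add_left measurable_const, setLIntegral_one,
          lintegral_finsetSum _ fun w _ ↦ by fun_prop]
    _ ≤ volume E + ∑ w ∈ p.roots.toFinset, ∫⁻ u, φ u := by
        gcongr volume E + ∑ w ∈ _, ?_ with w
        exact (setLIntegral_le_lintegral _ _).trans
          (lintegral_sub_right_eq_self (μ := volume) φ w).le
    _ ≤ volume E + p.natDegree * ∫⁻ u, φ u := by
        rw [Finset.sum_const, nsmul_eq_mul]
        gcongr
        exact (Multiset.toFinset_card_le _).trans p.card_roots'

lemma exists_lintegral_rpow_le_of_monic_le {d : ℕ} {c : ℝ} (hc : 0 ≤ c) (hcd : c * d < 1) {K : ℝ}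
    (hK : 0 < K) {E : Set ℂ} (hE : MeasurableSet E) (hE' : volume E ≠ ⊤) :
    ∃ C : ℝ≥0∞, C ≠ ⊤ ∧ ∀ (f : ℂ → ℂ) (p : ℂ[X]), p.Monic → p.natDegree = d →
      (∀ z ∈ E, K * ‖p.eval z‖ ≤ ‖f z‖) →
      ∫⁻ z in E, ENNReal.ofReal (‖f z‖ ^ (-(2 * c))) ≤ C := by
  obtain ⟨C, hC, hbound⟩ := exists_lintegral_norm_eval_rpow_le hc hcd hE'
  refine ⟨ENNReal.ofReal (K ^ (-(2 * c))) * C, ENNReal.mul_ne_top ENNReal.ofReal_ne_top hC, ?_⟩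
  intro f p hp hd hpf
  have hroots : ∀ᵐ z : ℂ, z ∉ {z | p.IsRoot z} :=
    measure_eq_zero_iff_ae_notMem.1 ((Polynomial.finite_setOfPred_isRoot hp.ne_zero).measure_zero _)
  calc ∫⁻ z in E, ENNReal.ofReal (‖f z‖ ^ (-(2 * c)))
      ≤ ∫⁻ z in E, ENNReal.ofReal (K ^ (-(2 * c))) *
          ENNReal.ofReal (‖p.eval z‖ ^ (-(2 * c))) := by
        refine setLIntegral_mono_ae' hE ?_
        filter_upwards [hroots] with z hz hzE
        have hpz : 0 < ‖p.eval z‖ := norm_pos_iff.2 hz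
        rw [← ENNReal.ofReal_mul (by positivity), ← Real.mul_rpow hK.le hpz.le]
        exact ENNReal.ofReal_le_ofReal
          (Real.rpow_le_rpow_of_nonpos (by positivity) (hpf z hzE) (by linarith))
    _ = ENNReal.ofReal (K ^ (-(2 * c))) * ∫⁻ z in E, ENNReal.ofReal (‖p.eval z‖ ^ (-(2 * c))) :=
        lintegral_const_mul _ (by fun_prop)
    _ ≤ ENNReal.ofReal (K ^ (-(2 * c))) * C := by gcongr; exact hbound p hp hd

end MonicPolynomials

section PerturbedPolynomials

lemma diffContOnCl_dslope {e : ℂ → ℂ} {s : Set ℂ} {w : ℂ} (he : DiffContOnCl ℂ e s)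
    (hs : s ∈ 𝓝 w) : DiffContOnCl ℂ (dslope e w) s where
  differentiableOn := (Complex.differentiableOn_dslope hs).2 he.differentiableOn
  continuousOn := (continuousOn_dslope (mem_of_superset hs subset_closure)).2
    ⟨he.continuousOn, he.differentiableAt' hs⟩

lemma norm_dslope_le_of_norm_le {e : ℂ → ℂ} {z₀ w : ℂ} {ρ η : ℝ} (hρ : 0 < ρ)
    (he : DiffContOnCl ℂ e (ball z₀ ρ)) (hη : ∀ z ∈ closedBall z₀ ρ, ‖e z‖ ≤ η)
    (hw : w ∈ closedBall z₀ (ρ / 2)) :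
    ∀ z ∈ closedBall z₀ ρ, ‖dslope e w z‖ ≤ 4 / ρ * η := by
  have hwρ : w ∈ closedBall z₀ ρ := closedBall_subset_closedBall (by linarith) hw
  have hwb : w ∈ ball z₀ ρ := closedBall_subset_ball (by linarith) hw
  have hsphere : ∀ z ∈ sphere z₀ ρ, ‖dslope e w z‖ ≤ 4 / ρ * η := by
    intro z hz
    have hzw : ρ / 2 ≤ ‖z - w‖ := by
      have := dist_triangle z w z₀
      rw [mem_sphere.1 hz, dist_eq_norm z w] at this
      linarith [mem_closedBall.1 hw]
    have hne : z ≠ w := sub_ne_zero.1 (norm_pos_iff.1 ((half_pos hρ).trans_le hzw))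
    rw [dslope_of_ne _ hne, slope_def_field, norm_div]
    have hη0 : 0 ≤ η := (norm_nonneg _).trans (hη w hwρ)
    calc ‖e z - e w‖ / ‖z - w‖ ≤ (η + η) / (ρ / 2) := by
          gcongr
          exact norm_sub_le_of_le (hη z (sphere_subset_closedBall hz)) (hη w hwρ)
      _ = 4 / ρ * η := by field_simp; ring
  intro z hz
  exact Complex.norm_le_of_forall_mem_frontier_norm_le isBounded_ball
    (diffContOnCl_dslope he (isOpen_ball.mem_nhds hwb))
    (by rwa [frontier_ball _ hρ.ne']) (by rwa [closure_ball _ hρ.ne'])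

lemma monic_divByMonic_X_sub_C {R : Type*} [CommRing R] {p : R[X]} (hp : p.Monic)
    (hd : p.natDegree ≠ 0) (w : R) : (p /ₘ (Polynomial.X - Polynomial.C w)).Monic := by
  nontriviality R
  have hdeg : (Polynomial.X - Polynomial.C w).degree ≤ p.degree := by
    rw [Polynomial.degree_X_sub_C, Nat.WithBot.one_le_iff_zero_lt]
    exact Polynomial.natDegree_pos_iff_degree_pos.1 (Nat.pos_of_ne_zero hd)
  exact (Polynomial.leadingCoeff_divByMonic_of_monic (Polynomial.monic_X_sub_C w) hdeg).trans hp

lemma sub_mul_divByMonic_add_dslope {K : Type*} [NontriviallyNormedField K] (p : K[X]) (e : K → K)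
    (w z : K) :
    (z - w) * ((p /ₘ (Polynomial.X - Polynomial.C w)).eval z + dslope e w z) =
      (p.eval z + e z) - (p.eval w + e w) := by
  have hp_div : (z - w) * (p /ₘ (Polynomial.X - Polynomial.C w)).eval z = p.eval z - p.eval w := by
    simpa [Polynomial.modByMonic_X_sub_C_eq_C_eval] using
      congrArg (Polynomial.eval z) (Polynomial.X_sub_C_mul_divByMonic_eq_sub_modByMonic p w)
  have he_div : (z - w) * dslope e w z = e z - e w := sub_smul_dslope e w z
  rw [mul_add, hp_div, he_div]
  ring

/-- Divided differences at a minimum `w` of `‖p + e‖` lower the degree of `p` and keep `e` small,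
so induction on the degree strips off one linear factor `X - w` at a time. -/
theorem exists_monic_norm_eval_le_norm_add {z₀ : ℂ} {ρ : ℝ} (hρ : 0 < ρ) {d : ℕ} {p : ℂ[X]}
    (hp : p.Monic) (hd : p.natDegree = d) {e : ℂ → ℂ} (he : DiffContOnCl ℂ e (ball z₀ ρ)) {η : ℝ}
    (hη : ∀ z ∈ closedBall z₀ ρ, ‖e z‖ ≤ η) (hsmall : (4 / ρ) ^ d * η ≤ 1 / 2) :
    ∃ r : ℂ[X], r.Monic ∧ r.natDegree = d ∧ ∀ z ∈ closedBall z₀ (ρ / 2),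
      (1 / 2) ^ (d + 1) * ‖r.eval z‖ ≤ ‖p.eval z + e z‖ := by
  have hsub : closedBall z₀ (ρ / 2) ⊆ closedBall z₀ ρ :=
    closedBall_subset_closedBall (by linarith)
  induction d generalizing p e η with
  | zero =>
    refine ⟨1, Polynomial.monic_one, Polynomial.natDegree_one, fun z hz ↦ ?_⟩
    have hez : ‖e z‖ ≤ 1 / 2 := (hη z (hsub hz)).trans (by simpa using hsmall)
    have := norm_sub_le_norm_add 1 (e z)
    rw [hp.natDegree_eq_zero.1 hd]
    simp only [Polynomial.eval_one, norm_one] at this ⊢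
    linarith
  | succ d ih =>
    have hcont : ContinuousOn (fun z ↦ ‖p.eval z + e z‖) (closedBall z₀ (ρ / 2)) :=
      (p.continuous.continuousOn.add (he.continuousOn_ball.mono hsub)).norm
    obtain ⟨w, hw, hmin⟩ := (isCompact_closedBall z₀ (ρ / 2)).exists_isMinOn
      ⟨z₀, mem_closedBall_self (by linarith)⟩ hcont
    have hw_nhds : ball z₀ ρ ∈ 𝓝 w :=
      isOpen_ball.mem_nhds (closedBall_subset_ball (by linarith) hw)
    set q := p /ₘ (Polynomial.X - Polynomial.C w)
    have hq : q.Monic := monic_divByMonic_X_sub_C hp (by omega) w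
    have hqd : q.natDegree = d := by
      rw [Polynomial.natDegree_divByMonic _ (Polynomial.monic_X_sub_C w),
        Polynomial.natDegree_X_sub_C, hd, Nat.add_sub_cancel]
    obtain ⟨r, hr, hrd, hbound⟩ := ih hq hqd (diffContOnCl_dslope he hw_nhds)
      (norm_dslope_le_of_norm_le hρ he hη hw) (by rwa [← mul_assoc, ← pow_succ])
    refine ⟨(Polynomial.X - Polynomial.C w) * r, (Polynomial.monic_X_sub_C w).mul hr, ?_, ?_⟩
    · rw [(Polynomial.monic_X_sub_C w).natDegree_mul hr, Polynomial.natDegree_X_sub_C, hrd,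
        add_comm]
    intro z hz
    have hmin_z : ‖p.eval w + e w‖ ≤ ‖p.eval z + e z‖ := hmin hz
    calc (1 / 2) ^ (d + 1 + 1) * ‖((Polynomial.X - Polynomial.C w) * r).eval z‖
        = 1 / 2 * (‖z - w‖ * ((1 / 2) ^ (d + 1) * ‖r.eval z‖)) := by
          simp only [Polynomial.eval_mul, Polynomial.eval_sub, Polynomial.eval_X,
            Polynomial.eval_C, norm_mul]
          ring
      _ ≤ 1 / 2 * (‖z - w‖ * ‖q.eval z + dslope e w z‖) := by gcongr; exact hbound z hz
      _ = 1 / 2 * ‖(p.eval z + e z) - (p.eval w + e w)‖ := by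
          rw [← norm_mul, sub_mul_divByMonic_add_dslope]
      _ ≤ 1 / 2 * (‖p.eval z + e z‖ + ‖p.eval w + e w‖) := by gcongr; exact norm_sub_le _ _
      _ ≤ ‖p.eval z + e z‖ := by linarith

lemma exists_monic_mul_norm_eval_le {z₀ A : ℂ} (hA : A ≠ 0) {ρ : ℝ} (hρ : 0 < ρ) {n : ℕ}
    {f : ℂ → ℂ} (hf : DiffContOnCl ℂ f (ball z₀ ρ))
    (hfA : ∀ z ∈ closedBall z₀ ρ, ‖f z - A * (z - z₀) ^ n‖ ≤ ‖A‖ / 2 * (ρ / 4) ^ n) :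
    ∃ r : ℂ[X], r.Monic ∧ r.natDegree = n ∧ ∀ z ∈ closedBall z₀ (ρ / 2),
      ‖A‖ * (1 / 2) ^ (n + 1) * ‖r.eval z‖ ≤ ‖f z‖ := by
  have hA' : 0 < ‖A‖ := norm_pos_iff.2 hA
  have hpow : DiffContOnCl ℂ (fun z ↦ (z - z₀) ^ n) (ball z₀ ρ) :=
    Differentiable.diffContOnCl (by fun_prop)
  have hη : ∀ z ∈ closedBall z₀ ρ, ‖A⁻¹ • f z - (z - z₀) ^ n‖ ≤ 1 / 2 * (ρ / 4) ^ n := by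
    intro z hz
    have : A⁻¹ • f z - (z - z₀) ^ n = A⁻¹ * (f z - A * (z - z₀) ^ n) := by
      rw [smul_eq_mul]
      field_simp
    rw [this, norm_mul, norm_inv, inv_mul_le_iff₀ hA']
    linarith [hfA z hz]
  have hsmall : (4 / ρ) ^ n * (1 / 2 * (ρ / 4) ^ n) ≤ 1 / 2 := by
    rw [mul_left_comm, ← mul_pow, div_mul_div_cancel₀ hρ.ne', div_self four_ne_zero]
    simp
  obtain ⟨r, hr, hrn, hbound⟩ := exists_monic_norm_eval_le_norm_add hρ
    ((Polynomial.monic_X_sub_C z₀).pow n) (by simp) ((hf.const_smul A⁻¹).sub hpow) hη hsmall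
  refine ⟨r, hr, hrn, fun z hz ↦ ?_⟩
  calc ‖A‖ * (1 / 2) ^ (n + 1) * ‖r.eval z‖
      ≤ ‖A‖ * ‖A⁻¹ * f z‖ := by
        rw [mul_assoc]
        gcongr
        simpa using hbound z hz
    _ = ‖f z‖ := by rw [← norm_mul, mul_inv_cancel_left₀ hA]

end PerturbedPolynomials

section Semicontinuity

variable {ι : Type*} {l : Filter ι} {f : ι → ℂ → ℂ} {g : ℂ → ℂ} {U : Set ℂ}

lemma eventually_norm_sub_mul_pow_le (hU : IsOpen U)
    (hfg : TendstoLocallyUniformlyOn f g l U) {z₀ : ℂ} (hz₀ : z₀ ∈ U) (hg : AnalyticAt ℂ g z₀)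
    {n : ℕ} (hn : analyticOrderAt g z₀ = n) :
    ∃ A : ℂ, A ≠ 0 ∧ ∃ ρ > 0, closedBall z₀ ρ ⊆ U ∧
      ∀ᶠ i in l, ∀ z ∈ closedBall z₀ ρ, ‖f i z - A * (z - z₀) ^ n‖ ≤ ‖A‖ / 2 * (ρ / 4) ^ n := by
  obtain ⟨h, h_an, hA, hgh⟩ := hg.analyticOrderAt_eq_natCast.1 hn
  have : 0 < ‖h z₀‖ := norm_pos_iff.2 hA
  have hclose : ∀ᶠ z in 𝓝 z₀, dist (h z) (h z₀) < ‖h z₀‖ / 4 * (1 / 4) ^ n :=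
    tendsto_nhds.1 h_an.continuousAt _ (by positivity)
  obtain ⟨ρ, hρ, hball⟩ :=
    nhds_basis_closedBall.eventually_iff.1 ((hU.eventually_mem hz₀).and (hgh.and hclose))
  have hsub : closedBall z₀ ρ ⊆ U := fun z hz ↦ (hball hz).1
  refine ⟨h z₀, hA, ρ, hρ, hsub, ?_⟩
  have hunif := (tendstoLocallyUniformlyOn_iff_forall_isCompact hU).1 hfg _ hsub
    (isCompact_closedBall z₀ ρ)
  filter_upwards [tendstoUniformlyOn_iff.1 hunif (‖h z₀‖ / 4 * (ρ / 4) ^ n) (by positivity)]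
    with i hi z hz
  obtain ⟨-, hgz, hhz⟩ := hball hz
  rw [dist_eq_norm] at hhz
  have hlead : ‖g z - h z₀ * (z - z₀) ^ n‖ ≤ ‖h z₀‖ / 4 * (ρ / 4) ^ n :=
    calc ‖g z - h z₀ * (z - z₀) ^ n‖ = ‖z - z₀‖ ^ n * ‖h z - h z₀‖ := by
          rw [hgz, smul_eq_mul, ← norm_pow, ← norm_mul]
          ring_nf
      _ ≤ ρ ^ n * (‖h z₀‖ / 4 * (1 / 4) ^ n) := by
          gcongr
          exact mem_closedBall_iff_norm.1 hz
      _ = ‖h z₀‖ / 4 * (ρ / 4) ^ n := by ring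
  have hfgz : ‖f i z - g z‖ ≤ ‖h z₀‖ / 4 * (ρ / 4) ^ n := by
    rw [← dist_eq_norm, dist_comm]
    exact (hi z hz).le
  calc ‖f i z - h z₀ * (z - z₀) ^ n‖
      ≤ ‖f i z - g z‖ + ‖g z - h z₀ * (z - z₀) ^ n‖ := norm_sub_le_norm_sub_add_norm_sub ..
    _ ≤ ‖h z₀‖ / 4 * (ρ / 4) ^ n + ‖h z₀‖ / 4 * (ρ / 4) ^ n := add_le_add hfgz hlead
    _ = ‖h z₀‖ / 2 * (ρ / 4) ^ n := by ring

theorem exists_nhds_lintegral_rpow_le (hU : IsOpen U) (hf : ∀ᶠ i in l, DifferentiableOn ℂ (f i) U)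
    (hfg : TendstoLocallyUniformlyOn f g l U) {z₀ : ℂ} (hz₀ : z₀ ∈ U) {n : ℕ}
    (hn : analyticOrderAt g z₀ = n) {c : ℝ} (hc : 0 ≤ c) (hcn : c * n < 1) :
    ∃ V ∈ 𝓝 z₀, ∃ C : ℝ≥0∞, C ≠ ⊤ ∧
      ∀ᶠ i in l, ∫⁻ z in V, ENNReal.ofReal (‖f i z‖ ^ (-(2 * c))) ≤ C := by
  rcases l.eq_or_neBot with rfl | _
  · exact ⟨Set.univ, univ_mem, 0, ENNReal.zero_ne_top, eventually_bot⟩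
  have hg : AnalyticAt ℂ g z₀ := (hfg.differentiableOn hf hU).analyticAt (hU.mem_nhds hz₀)
  obtain ⟨A, hA, ρ, hρ, hsub, hclose⟩ := eventually_norm_sub_mul_pow_le hU hfg hz₀ hg hn
  have hK : 0 < ‖A‖ * (1 / 2) ^ (n + 1) := by positivity
  obtain ⟨C, hC, hbound⟩ := exists_lintegral_rpow_le_of_monic_le hc hcn hK
    (measurableSet_closedBall (x := z₀) (ε := ρ / 2)) measure_closedBall_lt_top.ne
  refine ⟨closedBall z₀ (ρ / 2), closedBall_mem_nhds _ (half_pos hρ), C, hC, ?_⟩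
  filter_upwards [hf, hclose] with i hfi hi
  obtain ⟨r, hr, hrn, hle⟩ := exists_monic_mul_norm_eval_le hA hρ (hfi.diffContOnCl_ball hsub) hi
  exact hbound (f i) r hr hrn hle

theorem exists_lintegral_rpow_le_of_isCompact {K : Set ℂ} (hK : IsCompact K) (hU : IsOpen U)
    (hKU : K ⊆ U) (hf : ∀ᶠ i in l, DifferentiableOn ℂ (f i) U)
    (hfg : TendstoLocallyUniformlyOn f g l U) {d : ℕ}
    (hd : ∀ z ∈ K, analyticOrderAt g z ≤ d) {c : ℝ} (hc : 0 ≤ c) (hcd : c * d < 1) :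
    ∃ C : ℝ≥0∞, C ≠ ⊤ ∧
      ∀ᶠ i in l, ∫⁻ z in K, ENNReal.ofReal (‖f i z‖ ^ (-(2 * c))) ≤ C := by
  refine hK.induction_on (p := fun V ↦ ∃ C : ℝ≥0∞, C ≠ ⊤ ∧
    ∀ᶠ i in l, ∫⁻ z in V, ENNReal.ofReal (‖f i z‖ ^ (-(2 * c))) ≤ C) ?_ ?_ ?_ ?_
  · exact ⟨0, ENNReal.zero_ne_top, by simp⟩
  · rintro V W hVW ⟨C, hC, hW⟩
    exact ⟨C, hC, hW.mono fun i hi ↦ (lintegral_mono_set hVW).trans hi⟩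
  · rintro V W ⟨C, hC, hV⟩ ⟨C', hC', hW⟩
    refine ⟨C + C', ENNReal.add_ne_top.2 ⟨hC, hC'⟩, ?_⟩
    filter_upwards [hV, hW] with i hVi hWi
    exact (lintegral_union_le _ _ _).trans (add_le_add hVi hWi)
  · intro z hz
    obtain ⟨n, hn, hnd⟩ := ENat.le_natCast_iff.1 (hd z hz)
    have hcn : c * n < 1 := lt_of_le_of_lt (by gcongr) hcd
    obtain ⟨V, hV, hbound⟩ := exists_nhds_lintegral_rpow_le hU hf hfg (hKU hz) hn hc hcn
    exact ⟨V, mem_nhdsWithin_of_mem_nhds hV, hbound⟩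

end Semicontinuity

section Limits

lemma tendstoLocallyUniformlyOn_of_continuousOn_uncurry {α β E : Type*} [TopologicalSpace α]
    [TopologicalSpace β] [LocallyCompactSpace β] [UniformSpace E] {f : α → β → E} {s : Set α}
    {t : Set β} {x : α} (hs : s ∈ 𝓝 x) (ht : IsOpen t) (hf : ContinuousOn f.uncurry (s ×ˢ t)) :
    TendstoLocallyUniformlyOn f (f x) (𝓝 x) t := by
  refine (tendstoLocallyUniformlyOn_iff_forall_isCompact ht).2 fun K hKt hK u hu ↦ ?_
  obtain ⟨v, hv, hvu⟩ := hK.mem_uniformity_of_prod (hf.mono (Set.prod_mono_right hKt))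
    (mem_of_mem_nhds hs) (symm_le_uniformity hu)
  rw [nhdsWithin_eq_nhds.2 hs] at hv
  filter_upwards [hv] with y hy z hz
  exact hvu y hy z hz

lemma tendsto_mul_zero_of_eventually_le {α : Type*} {l : Filter α} {u v : α → ℝ≥0∞} {C : ℝ≥0∞}
    (hC : C ≠ ⊤) (hu : Tendsto u l (𝓝 0)) (hv : ∀ᶠ x in l, v x ≤ C) :
    Tendsto (fun x ↦ u x * v x) l (𝓝 0) := by
  have hlim : Tendsto (fun x ↦ u x * C) l (𝓝 0) := by
    simpa using ENNReal.Tendsto.mul_const hu (.inr hC)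
  refine tendsto_of_tendsto_of_tendsto_of_le_of_le' tendsto_const_nhds hlim
    (.of_forall fun _ ↦ zero_le) ?_
  filter_upwards [hv] with x hx
  gcongr

lemma tendsto_ofReal_norm_rpow_nhds_zero {E : Type*} [SeminormedAddGroup E] {β : ℝ} (hβ : 0 < β) :
    Tendsto (fun x : E ↦ ENNReal.ofReal (‖x‖ ^ β)) (𝓝 0) (𝓝 0) := by
  have hcont : Continuous fun x : E ↦ ENNReal.ofReal (‖x‖ ^ β) :=
    ENNReal.continuous_ofReal.comp (continuous_norm.rpow_const fun _ ↦ .inr hβ.le)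
  simpa [Real.zero_rpow hβ.ne'] using hcont.tendsto 0

end Limits

section RescaledSeries

/-- The annulus `1 / R < |z| < R` of the theorem; it is empty unless `1 < R`. -/
def annulus (R : ℝ) : Set ℂ := {z | 1 / R < ‖z‖ ∧ ‖z‖ < R}

/-- The series `s ^ (-D) * F (s ^ p * z) (s ^ q * z⁻¹)` of `F = ∑ a m n x ^ m y ^ n`, written so
that it makes sense at `s = 0` as well. The truncated subtraction in the exponent of `s` is harmless
when `a m n = 0` for all `p * m + q * n < D`. -/
noncomputable def rescaledSeries (a : ℕ → ℕ → ℂ) (p q D : ℕ) (s z : ℂ) : ℂ :=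
  ∑' mn : ℕ × ℕ,
    a mn.1 mn.2 * s ^ (p * mn.1 + q * mn.2 - D) * z ^ ((mn.1 : ℤ) - (mn.2 : ℤ))

open Classical in
/-- The exponents of the initial form of weight `D` of `∑ a m n x ^ m y ^ n`, where `x` and `y` have
the positive weights `p` and `q`. -/
noncomputable def initialExponents (a : ℕ → ℕ → ℂ) (p q D : ℕ) : Finset (ℕ × ℕ) :=
  {mn ∈ Finset.range (D + 1) ×ˢ Finset.range (D + 1) |
    p * mn.1 + q * mn.2 = D ∧ a mn.1 mn.2 ≠ 0}

variable {a : ℕ → ℕ → ℂ} {p q D : ℕ}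

lemma mem_initialExponents (hp : 0 < p) (hq : 0 < q) {mn : ℕ × ℕ} :
    mn ∈ initialExponents a p q D ↔ p * mn.1 + q * mn.2 = D ∧ a mn.1 mn.2 ≠ 0 := by
  have hfst : mn.1 ≤ p * mn.1 := Nat.le_mul_of_pos_left _ hp
  have hsnd : mn.2 ≤ q * mn.2 := Nat.le_mul_of_pos_left _ hq
  simp only [initialExponents, Finset.mem_filter, Finset.mem_product, Finset.mem_range]
  exact and_iff_right_of_imp fun h ↦ by omega

lemma card_initialExponents_le (hp : 0 < p) (hq : 0 < q) :
    (initialExponents a p q D).card ≤ D / p + 1 := by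
  have hmaps : ∀ mn ∈ initialExponents a p q D, mn.1 ∈ Finset.range (D / p + 1) := by
    intro mn hmn
    have := ((mem_initialExponents hp hq).1 hmn).1
    rw [Finset.mem_range, Nat.lt_succ_iff, Nat.le_div_iff_mul_le hp, mul_comm]
    omega
  have hinj : Set.InjOn Prod.fst (initialExponents a p q D : Set (ℕ × ℕ)) := by
    rintro ⟨m, n⟩ h ⟨m', n'⟩ h' (rfl : m = m')
    have hn : q * n = q * n' := Nat.add_left_cancel
      (((mem_initialExponents hp hq).1 h).1.trans ((mem_initialExponents hp hq).1 h').1.symm)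
    rw [Nat.eq_of_mul_eq_mul_left hq hn]
  exact (Finset.card_le_card_of_injOn Prod.fst hmaps hinj).trans_eq (Finset.card_range _)

lemma injOn_sub_initialExponents (hp : 0 < p) (hq : 0 < q) :
    Set.InjOn (fun mn : ℕ × ℕ ↦ (mn.1 : ℤ) - (mn.2 : ℤ)) (initialExponents a p q D) := by
  rintro ⟨m, n⟩ h ⟨m', n'⟩ h' (hsub : (m : ℤ) - n = m' - n')
  have hD : (p * m + q * n : ℤ) = p * m' + q * n' := by
    exact_mod_cast ((mem_initialExponents hp hq).1 h).1.trans
      ((mem_initialExponents hp hq).1 h').1.symm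
  have hm : ((p + q : ℤ)) * m = (p + q) * m' := by linear_combination hD + q * hsub
  have hm' : (m : ℤ) = m' := mul_left_cancel₀ (by positivity) hm
  ext <;> simp only <;> omega

lemma tsum_div_pow_eq_rescaledSeries (ha : ∀ m n, p * m + q * n < D → a m n = 0) {s z : ℂ}
    (hs : s ≠ 0) (hz : z ≠ 0) :
    (∑' mn : ℕ × ℕ, a mn.1 mn.2 * (s ^ p * z) ^ mn.1 * (s ^ q * z⁻¹) ^ mn.2) / s ^ D =
      rescaledSeries a p q D s z := by
  rw [← tsum_div_const]
  refine tsum_congr fun ⟨m, n⟩ ↦ ?_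
  rcases lt_or_ge (p * m + q * n) D with hlt | hge
  · simp [ha m n hlt]
  · rw [pow_sub₀ s hs hge, zpow_sub₀ hz, zpow_natCast, zpow_natCast, mul_pow, mul_pow, inv_pow]
    field_simp
    ring

lemma rescaledSeries_zero (hp : 0 < p) (hq : 0 < q)
    (ha : ∀ m n, p * m + q * n < D → a m n = 0) :
    rescaledSeries a p q D 0 =
      fun z ↦ ∑ mn ∈ initialExponents a p q D, a mn.1 mn.2 * z ^ ((mn.1 : ℤ) - (mn.2 : ℤ)) := by
  ext z
  have hsupp : ∀ mn ∉ initialExponents a p q D,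
      a mn.1 mn.2 * 0 ^ (p * mn.1 + q * mn.2 - D) * z ^ ((mn.1 : ℤ) - (mn.2 : ℤ)) = 0 := by
    intro mn hmn
    rcases eq_or_ne (a mn.1 mn.2) 0 with h0 | h0
    · simp [h0]
    have hge : D ≤ p * mn.1 + q * mn.2 := not_lt.1 fun h ↦ h0 (ha _ _ h)
    have hne : p * mn.1 + q * mn.2 ≠ D := fun h ↦ hmn ((mem_initialExponents hp hq).2 ⟨h, h0⟩)
    rw [zero_pow (by omega), mul_zero, zero_mul]
  rw [rescaledSeries, tsum_eq_sum hsupp]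
  refine Finset.sum_congr rfl fun mn hmn ↦ ?_
  rw [((mem_initialExponents hp hq).1 hmn).1, Nat.sub_self, pow_zero, mul_one]

lemma analyticOrderAt_rescaledSeries_zero_le (hp : 0 < p) (hq : 0 < q)
    (ha : ∀ m n, p * m + q * n < D → a m n = 0) (haD : ∃ m n, p * m + q * n = D ∧ a m n ≠ 0)
    {z₀ : ℂ} (hz₀ : z₀ ≠ 0) :
    analyticOrderAt (rescaledSeries a p q D 0) z₀ ≤ (D / p : ℕ) := by
  obtain ⟨m, n, hmn, hamn⟩ := haD
  have hne : (initialExponents a p q D).Nonempty :=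
    ⟨(m, n), (mem_initialExponents hp hq).2 ⟨hmn, hamn⟩⟩
  rw [rescaledSeries_zero hp hq ha]
  refine Order.le_of_lt_add_one ?_
  calc _ < ((initialExponents a p q D).card : ℕ∞) :=
        analyticOrderAt_sum_mul_zpow_lt_card hne
          (fun mn h ↦ ((mem_initialExponents hp hq).1 h).2) (injOn_sub_initialExponents hp hq) hz₀
    _ ≤ (D / p : ℕ) + 1 := by exact_mod_cast card_initialExponents_le hp hq

lemma ne_zero_of_mem_annulus {R : ℝ} {z : ℂ} (hz : z ∈ annulus R) : z ≠ 0 := by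
  rintro rfl
  obtain ⟨h1, h2⟩ := hz
  rw [norm_zero] at h1 h2
  exact (one_div_pos.2 h2).not_gt h1

lemma norm_inv_lt_of_mem_annulus {R : ℝ} {z : ℂ} (hz : z ∈ annulus R) : ‖z⁻¹‖ < R := by
  have hR : 0 < R := (norm_nonneg z).trans_lt hz.2
  rw [norm_inv]
  exact inv_lt_of_inv_lt₀ hR (by simpa using hz.1)

lemma isOpen_annulus (R : ℝ) : IsOpen (annulus R) :=
  (isOpen_lt continuous_const continuous_norm).inter (isOpen_lt continuous_norm continuous_const)

lemma exists_summable_mul_pow_sub (hp : p ≠ 0) (hq : q ≠ 0) {r R : ℝ} (hr : 0 < r) (hR : 0 < R)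
    (hsum : Summable fun mn : ℕ × ℕ ↦ ‖a mn.1 mn.2‖ * r ^ mn.1 * r ^ mn.2) :
    ∃ σ > 0, Summable fun mn : ℕ × ℕ ↦
      ‖a mn.1 mn.2‖ * σ ^ (p * mn.1 + q * mn.2 - D) * (R ^ mn.1 * R ^ mn.2) := by
  set σ := min 1 (r / R)
  have hσ : 0 < σ := lt_min one_pos (by positivity)
  have hσ1 : σ ≤ 1 := min_le_left _ _
  have hσR : ∀ e ≠ 0, σ ^ e * R ≤ r := fun e he ↦
    calc σ ^ e * R ≤ r / R * R := by
          gcongr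
          exact (pow_le_of_le_one hσ.le hσ1 he).trans (min_le_right _ _)
      _ = r := div_mul_cancel₀ r hR.ne'
  refine ⟨σ, hσ, (hsum.mul_left (σ ^ D)⁻¹).of_nonneg_of_le (fun _ ↦ by positivity) ?_⟩
  rintro ⟨m, n⟩
  have hexp : σ ^ (p * m + q * n - D) ≤ (σ ^ D)⁻¹ * σ ^ (p * m + q * n) := by
    rw [le_inv_mul_iff₀ (by positivity), ← pow_add]
    exact pow_le_pow_of_le_one hσ.le hσ1 (by omega)
  calc ‖a m n‖ * σ ^ (p * m + q * n - D) * (R ^ m * R ^ n)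
      ≤ ‖a m n‖ * ((σ ^ D)⁻¹ * σ ^ (p * m + q * n)) * (R ^ m * R ^ n) := by gcongr
    _ = (σ ^ D)⁻¹ * (‖a m n‖ * (σ ^ p * R) ^ m * (σ ^ q * R) ^ n) := by ring
    _ ≤ (σ ^ D)⁻¹ * (‖a m n‖ * r ^ m * r ^ n) := by
        gcongr
        exacts [hσR p hp, hσR q hq]

variable {σ R : ℝ}

lemma norm_mul_pow_mul_zpow_le {s z : ℂ} (hs : ‖s‖ ≤ σ) (hz : z ∈ annulus R) (b : ℂ) (j m n : ℕ) :
    ‖b * s ^ j * z ^ ((m : ℤ) - (n : ℤ))‖ ≤ ‖b‖ * σ ^ j * (R ^ m * R ^ n) := by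
  have hz_inv := (norm_inv_lt_of_mem_annulus hz).le
  rw [zpow_sub₀ (ne_zero_of_mem_annulus hz), zpow_natCast, zpow_natCast, div_eq_mul_inv, ← inv_pow,
    norm_mul, norm_mul, norm_mul, norm_pow, norm_pow, norm_pow]
  have hσ : 0 ≤ σ := (norm_nonneg s).trans hs
  have hR : 0 ≤ R := (norm_nonneg z).trans hz.2.le
  gcongr
  exact hz.2.le

lemma continuousOn_rescaledSeries
    (hu : Summable fun mn : ℕ × ℕ ↦
      ‖a mn.1 mn.2‖ * σ ^ (p * mn.1 + q * mn.2 - D) * (R ^ mn.1 * R ^ mn.2)) :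
    ContinuousOn (rescaledSeries a p q D).uncurry (closedBall 0 σ ×ˢ annulus R) := by
  refine continuousOn_tsum (fun mn ↦ ?_) hu fun mn ⟨s, z⟩ ⟨hs, hz⟩ ↦
    norm_mul_pow_mul_zpow_le (mem_closedBall_zero_iff.1 hs) hz _ _ _ _
  exact (by fun_prop : Continuous fun sz : ℂ × ℂ ↦ a mn.1 mn.2 *
    sz.1 ^ (p * mn.1 + q * mn.2 - D)).continuousOn.mul
    (continuousOn_snd.zpow₀ _ fun sz hsz ↦ .inl (ne_zero_of_mem_annulus hsz.2))

lemma differentiableOn_rescaledSeries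
    (hu : Summable fun mn : ℕ × ℕ ↦
      ‖a mn.1 mn.2‖ * σ ^ (p * mn.1 + q * mn.2 - D) * (R ^ mn.1 * R ^ mn.2))
    {s : ℂ} (hs : s ∈ closedBall 0 σ) :
    DifferentiableOn ℂ (rescaledSeries a p q D s) (annulus R) := by
  refine Complex.differentiableOn_tsum_of_summable_norm hu (fun mn ↦ ?_) (isOpen_annulus R)
    fun mn z hz ↦ norm_mul_pow_mul_zpow_le (mem_closedBall_zero_iff.1 hs) hz _ _ _ _
  exact (differentiableOn_zpow _ _ (.inl fun h ↦ ne_zero_of_mem_annulus h rfl)).const_mul _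

lemma eventually_norm_pow_mul_lt {k : ℕ} (hk : k ≠ 0) {R R₀ : ℝ} (hR₀ : 0 < R₀) :
    ∀ᶠ s : ℂ in 𝓝 0, ‖s‖ ^ k * R < R₀ := by
  have hcont : Continuous fun s : ℂ ↦ ‖s‖ ^ k * R := by fun_prop
  exact hcont.tendsto 0 (gt_mem_nhds (by simpa [hk] using hR₀))

lemma eventually_eqOn_rescaledSeries (hp : 0 < p) (hq : 0 < q)
    (ha : ∀ m n, p * m + q * n < D → a m n = 0) {F : ℂ → ℂ → ℂ} {R₀ : ℝ} (hR₀ : 0 < R₀)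
    (hF : ∀ x y : ℂ, ‖x‖ < R₀ → ‖y‖ < R₀ →
      F x y = ∑' mn : ℕ × ℕ, a mn.1 mn.2 * x ^ mn.1 * y ^ mn.2) :
    ∀ᶠ s in 𝓝[≠] 0, Set.EqOn (fun z ↦ F (s ^ p * z) (s ^ q * z⁻¹) / s ^ D)
      (rescaledSeries a p q D s) (annulus R) := by
  filter_upwards [self_mem_nhdsWithin,
    nhdsWithin_le_nhds (eventually_norm_pow_mul_lt hp.ne' (R := R) hR₀),
    nhdsWithin_le_nhds (eventually_norm_pow_mul_lt hq.ne' (R := R) hR₀)] with s hs hsp hsq z hz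
  have hx : ‖s ^ p * z‖ < R₀ := by
    rw [norm_mul, norm_pow]
    exact lt_of_le_of_lt (by gcongr; exact hz.2.le) hsp
  have hy : ‖s ^ q * z⁻¹‖ < R₀ := by
    rw [norm_mul, norm_pow]
    exact lt_of_le_of_lt (by gcongr; exact (norm_inv_lt_of_mem_annulus hz).le) hsq
  simp only [hF _ _ hx hy, tsum_div_pow_eq_rescaledSeries ha hs (ne_zero_of_mem_annulus hz)]

theorem exists_lintegral_rescaledSeries_rpow_le (hp : 0 < p) (hq : 0 < q)
    (ha : ∀ m n, p * m + q * n < D → a m n = 0) (haD : ∃ m n, p * m + q * n = D ∧ a m n ≠ 0)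
    {r : ℝ} (hr : 0 < r)
    (hsum : Summable fun mn : ℕ × ℕ ↦ ‖a mn.1 mn.2‖ * r ^ mn.1 * r ^ mn.2)
    {c : ℝ} (hc : 0 ≤ c) (hcD : c * (D / p : ℕ) < 1) (hR : 0 < R) :
    ∃ C : ℝ≥0∞, C ≠ ⊤ ∧ ∀ᶠ s in 𝓝 0,
      ∫⁻ z in annulus R, ENNReal.ofReal (‖rescaledSeries a p q D s z‖ ^ (-(2 * c))) ≤ C := by
  obtain ⟨σ, hσ, hu⟩ := exists_summable_mul_pow_sub (D := D) hp.ne' hq.ne' hr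
    (mul_pos two_pos hR) hsum
  have hball : closedBall (0 : ℂ) σ ∈ 𝓝 0 := closedBall_mem_nhds 0 hσ
  set K : Set ℂ := closedBall 0 R \ ball 0 (1 / R)
  have hK : IsCompact K := (isCompact_closedBall 0 R).diff isOpen_ball
  have hKsub : K ⊆ annulus (2 * R) := by
    rintro z ⟨hzR, hz⟩
    rw [mem_closedBall_zero_iff] at hzR
    rw [mem_ball_zero_iff, not_lt] at hz
    exact ⟨(one_div_lt_one_div_of_lt hR (by linarith)).trans_le hz, by linarith⟩
  have hRK : annulus R ⊆ K := fun z hz ↦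
    ⟨mem_closedBall_zero_iff.2 hz.2.le, fun h ↦ hz.1.not_gt (mem_ball_zero_iff.1 h)⟩
  obtain ⟨C, hC, hbound⟩ := exists_lintegral_rpow_le_of_isCompact hK (isOpen_annulus (2 * R)) hKsub
    (mem_of_superset hball fun s hs ↦ differentiableOn_rescaledSeries hu hs)
    (tendstoLocallyUniformlyOn_of_continuousOn_uncurry hball (isOpen_annulus _)
      (continuousOn_rescaledSeries hu))
    (fun z hz ↦ analyticOrderAt_rescaledSeries_zero_le hp hq ha haD
      (ne_zero_of_mem_annulus (hKsub hz))) hc hcD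
  exact ⟨C, hC, hbound.mono fun s hs ↦ (lintegral_mono_set hRK).trans hs⟩

end RescaledSeries

theorem middle_annulus_contribution_tendsto_zero_general
    (R₀ : ℝ) (hR₀ : 0 < R₀) (a : ℕ → ℕ → ℂ) (F : ℂ → ℂ → ℂ)
    (hconv : ∀ x y : ℂ, ‖x‖ < R₀ → ‖y‖ < R₀ →
      Summable (fun mn : ℕ × ℕ => ‖a mn.1 mn.2‖ * ‖x‖ ^ mn.1 * ‖y‖ ^ mn.2))
    (hF : ∀ x y : ℂ, ‖x‖ < R₀ → ‖y‖ < R₀ →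
      F x y = ∑' mn : ℕ × ℕ, a mn.1 mn.2 * x ^ mn.1 * y ^ mn.2)
    (k l : ℕ) (hk : 0 < k) (hl : 0 < l)
    (hedge : ∃ m n : ℕ, l * m + k * n = k * l ∧ a m n ≠ 0)
    (hNewton : ∀ m n : ℕ, l * m + k * n < k * l → a m n = 0)
    (R₁ : ℝ) (hR₁ : 0 < R₁) (c : ℝ) (hc0 : 0 ≤ c) (hc1 : c < 1 / k) :
    Tendsto
      (fun s : ℂ =>
        ENNReal.ofReal (‖s‖ ^ (2 * (l : ℝ) - 2 * k * l * c)) *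
          ∫⁻ z in {z : ℂ | 1 / R₁ < ‖z‖ ∧ ‖z‖ < R₁},
            ENNReal.ofReal (‖F (s ^ l * z) (s ^ k * z⁻¹) / s ^ (k * l)‖ ^ (-(2 * c))))
      (𝓝[≠] 0) (𝓝 0) := by
  have hck : c * k < 1 := (lt_div_iff₀ (by positivity)).1 hc1
  have hβ : 0 < 2 * (l : ℝ) - 2 * k * l * c := by
    have : 0 < 2 * (l : ℝ) * (1 - c * k) := mul_pos (by positivity) (sub_pos.2 hck)
    linarith
  have hsum : Summable fun mn : ℕ × ℕ ↦ ‖a mn.1 mn.2‖ * (R₀ / 2) ^ mn.1 * (R₀ / 2) ^ mn.2 := by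
    have hnorm : ‖((R₀ / 2 : ℝ) : ℂ)‖ = R₀ / 2 := Complex.norm_of_nonneg (by positivity)
    have hlt : ‖((R₀ / 2 : ℝ) : ℂ)‖ < R₀ := hnorm.trans_lt (half_lt_self hR₀)
    simpa only [hnorm] using hconv _ _ hlt hlt
  obtain ⟨C, hC, hbound⟩ := exists_lintegral_rescaledSeries_rpow_le hl hk hNewton hedge
    (half_pos hR₀) hsum hc0 (by rwa [Nat.mul_div_cancel _ hl]) hR₁
  refine tendsto_mul_zero_of_eventually_le hC
    ((tendsto_ofReal_norm_rpow_nhds_zero hβ).mono_left nhdsWithin_le_nhds) ?_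
  filter_upwards [nhdsWithin_le_nhds hbound,
    eventually_eqOn_rescaledSeries (R := R₁) hl hk hNewton hR₀ hF] with s hs hFs
  refine (setLIntegral_congr_fun (isOpen_annulus R₁).measurableSet fun z hz ↦ ?_).trans_le hs
  exact congrArg (fun w ↦ ENNReal.ofReal (‖w‖ ^ (-(2 * c)))) (hFs hz)

/-- Vanishing of the middle-annulus contribution: if the Newton polygon of `F` is
the single segment joining `(k,0)` and `(0,l)`, then for every `R₁ > 1` and every
`0 < c < 1/max(k,l)`,
`|s|^{2l-2klc} · ∫_{1/R₁ < |z| < R₁} |s^{-kl}·F(s^l z, s^k z⁻¹)|^{-2c} dλ(z) → 0`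
as `s → 0`, `s ≠ 0`. -/
theorem middle_annulus_contribution_tendsto_zero
    (R₀ : ℝ) (hR₀ : 0 < R₀) (a : ℕ → ℕ → ℂ) (F : ℂ → ℂ → ℂ)
    (hconv : ∀ x y : ℂ, ‖x‖ < R₀ → ‖y‖ < R₀ →
      Summable (fun mn : ℕ × ℕ => ‖a mn.1 mn.2‖ * ‖x‖ ^ mn.1 * ‖y‖ ^ mn.2))
    (hF : ∀ x y : ℂ, ‖x‖ < R₀ → ‖y‖ < R₀ →
      F x y = ∑' mn : ℕ × ℕ, a mn.1 mn.2 * x ^ mn.1 * y ^ mn.2)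
    (k l : ℕ) (hk : 0 < k) (hl : 0 < l)
    (hak : a k 0 ≠ 0) (hal : a 0 l ≠ 0)
    (hNewton : ∀ m n : ℕ, l * m + k * n < k * l → a m n = 0)
    (R₁ : ℝ) (hR₁ : 1 < R₁) (c : ℝ) (hc0 : 0 < c) (hc1 : c < 1 / (max k l : ℕ)) :
    Tendsto
      (fun s : ℂ =>
        ENNReal.ofReal (‖s‖ ^ (2 * (l : ℝ) - 2 * k * l * c)) *
          ∫⁻ z in {z : ℂ | 1 / R₁ < ‖z‖ ∧ ‖z‖ < R₁},
            ENNReal.ofReal (‖F (s ^ l * z) (s ^ k * z⁻¹) / s ^ (k * l)‖ ^ (-(2 * c))))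
      (nhdsWithin 0 {0}ᶜ) (nhds 0) := by
  have hck : c < 1 / k := hc1.trans_le (by gcongr; exact le_max_left k l)
  exact middle_annulus_contribution_tendsto_zero_general R₀ hR₀ a F hconv hF k l hk hl
    ⟨k, 0, by ring, hak⟩ hNewton R₁ (one_pos.trans hR₁) c hc0.le hck
end
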